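/- Suppose (φ, θ, u, p̃) are smooth fields on [0,T] × Ω̄ with θ > 0 everywhere that solve the NACNS system (AC), (IE), (NS), (DF) in Ω and satisfy the thermal boundary conditions: u = 0 on ∂Ω, θ = θ_b on ∂Ω for a constant θ_b > 0, and on each face {xᵢ = 0} and {xᵢ = Lᵢ} of the box Ω the i-th component of ∇G(∇φ) vanishes (i.e. ∇G(∇φ)·n = 0 on ∂Ω, n the outward unit normal). Then for every t ∈ (0,T), (d/dt) ∫_Ω (e_tot − θ_b s) dx = −θ_b D(t) + ∫_Ω Q(1 − θ_b/θ) dx + ∫_Ω b·u dx. In particular, if Q ≡ 0 and b ≡ 0, the exergy t ↦ ∫_Ω (e_tot − θ_b s) dx is nonincreasing (exergy dissipation). -/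

import Mathlib

/-!
The exergy density `E = e_tot - θ_b s` satisfies a pointwise balance in divergence form,
`∂ₜE + div V = -θ_b (entropy production density) + Q (1 - θ_b/θ) + b·u`, where `V` is the exergy flux
`exFlux`. The Gibbs relation `de = ∂_φf dφ - θ d(∂_θf)` (`dir_intE`) and the commutation
`Dₜ∂ᵢφ = ∂ᵢDₜφ - ∂ᵢu·∇φ` give
`θ Dₜs = Dₜe + σ̃:∇u - θ ∇G·∇(Dₜφ) - ∂_φf Dₜφ` (`entropy_algebra`). The internal energy equation
turns `Dₜe + σ̃:∇u` into heat flux, viscous heating and source; completing `∇G·∇(Dₜφ)` to a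
divergence produces `μ Dₜφ = -M μ²/θ`. Adding the momentum equation tested with `u`, the Korteweg
power `σ̃:∇u` and the viscous power `η|Du|²` cancel against the internal energy
(`exergy_algebra`).

On each face `u`, `1 - θ_b/θ` and the normal component of `∇G(∇φ)` vanish, hence so does the normal
component of `V`, and the divergence theorem on the box (`integral_divg_eq_zero`) removes `div V`.
Since `G` and `f` are `C²` and the fields are smooth, `E` and `V` are `C¹`, which is what
differentiation under the integral (`hasDerivAt_integral_box`) and the divergence theorem need.
Monotonicity follows because the entropy production is nonnegative.
-/

open MeasureTheory

noncomputable section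

/-- `i`-th spatial partial derivative of a scalar field. -/
def pd {d : ℕ} (i : Fin d) (g : (Fin d → ℝ) → ℝ) (x : Fin d → ℝ) : ℝ :=
  fderiv ℝ g x (Pi.single i 1)

/-- Spatial gradient of a scalar field. -/
def grad {d : ℕ} (g : (Fin d → ℝ) → ℝ) (x : Fin d → ℝ) : Fin d → ℝ :=
  fun i => pd i g x

/-- Divergence of a vector field. -/
def divg {d : ℕ} (u : (Fin d → ℝ) → Fin d → ℝ) (x : Fin d → ℝ) : ℝ :=
  ∑ i, pd i (fun y => u y i) x

/-- Euclidean dot product. -/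
def dot {d : ℕ} (a b : Fin d → ℝ) : ℝ := ∑ i, a i * b i

/-- Time derivative of a time-dependent scalar field. -/
def dt {d : ℕ} (g : ℝ → (Fin d → ℝ) → ℝ) (t : ℝ) (x : Fin d → ℝ) : ℝ :=
  deriv (fun s => g s x) t

/-- The box `Ω = [0, L₁] × ⋯ × [0, L_d]`. -/
def box {d : ℕ} (L : Fin d → ℝ) : Set (Fin d → ℝ) :=
  Set.univ.pi fun i => Set.Icc 0 (L i)

/-- Spatial periodicity with periods `L`. -/
def SpacePeriodic {d : ℕ} (L : Fin d → ℝ) (g : (Fin d → ℝ) → ℝ) : Prop :=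
  ∀ x i, g (x + Pi.single i (L i)) = g x

/-- Entropy density `s = -G(∇φ) - ∂_θ f(φ, θ)`. -/
def entS {d : ℕ} (G : (Fin d → ℝ) → ℝ) (f : ℝ → ℝ → ℝ)
    (φ θ : ℝ → (Fin d → ℝ) → ℝ) (t : ℝ) (x : Fin d → ℝ) : ℝ :=
  -G (grad (φ t) x) - deriv (f (φ t x)) (θ t x)

/-- Internal energy density `e = f(φ, θ) - θ ∂_θ f(φ, θ)`. -/
def intE {d : ℕ} (f : ℝ → ℝ → ℝ) (φ θ : ℝ → (Fin d → ℝ) → ℝ)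
    (t : ℝ) (x : Fin d → ℝ) : ℝ :=
  f (φ t x) (θ t x) - θ t x * deriv (f (φ t x)) (θ t x)

/-- Total energy density `e_tot = e + |u|²/2`. -/
def totE {d : ℕ} (f : ℝ → ℝ → ℝ) (φ θ : ℝ → (Fin d → ℝ) → ℝ)
    (u : ℝ → (Fin d → ℝ) → Fin d → ℝ) (t : ℝ) (x : Fin d → ℝ) : ℝ :=
  intE f φ θ t x + (1 / 2) * ∑ i, (u t x i) ^ 2

/-- Chemical potential `μ = -θ div(∇G(∇φ)) + ∂_φ f(φ, θ)`. -/
def chemMu {d : ℕ} (G : (Fin d → ℝ) → ℝ) (f : ℝ → ℝ → ℝ)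
    (φ θ : ℝ → (Fin d → ℝ) → ℝ) (t : ℝ) (x : Fin d → ℝ) : ℝ :=
  -θ t x * divg (fun y => grad G (grad (φ t) y)) x
    + deriv (fun a => f a (θ t x)) (φ t x)

/-- Korteweg stress `σ̃ᵢⱼ = θ (∇G(∇φ))ᵢ ∂ⱼφ`. -/
def korteweg {d : ℕ} (G : (Fin d → ℝ) → ℝ)
    (φ θ : ℝ → (Fin d → ℝ) → ℝ) (t : ℝ) (x : Fin d → ℝ) (i j : Fin d) : ℝ :=
  θ t x * grad G (grad (φ t) x) i * pd j (φ t) x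

/-- Symmetric gradient `Dw = (∇w + (∇w)ᵀ)/2` of a (spatial) vector field. -/
def symGrad {d : ℕ} (w : (Fin d → ℝ) → Fin d → ℝ) (x : Fin d → ℝ) (i j : Fin d) : ℝ :=
  (pd i (fun y => w y j) x + pd j (fun y => w y i) x) / 2

/-- Entropy production functional `D(t)`. -/
def entProd {d : ℕ} (L : Fin d → ℝ) (G : (Fin d → ℝ) → ℝ) (f : ℝ → ℝ → ℝ)
    (M K η : ℝ → ℝ → ℝ) (φ θ : ℝ → (Fin d → ℝ) → ℝ)
    (u : ℝ → (Fin d → ℝ) → Fin d → ℝ) (t : ℝ) : ℝ :=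
  ∫ x in box L,
    (M (φ t x) (θ t x) * (chemMu G f φ θ t x / θ t x) ^ 2
      + K (φ t x) (θ t x) * ∑ i, (pd i (fun z => (θ t z)⁻¹) x) ^ 2
      + η (φ t x) (θ t x) / θ t x * ∑ i, ∑ j, (symGrad (u t) x i j) ^ 2)

/-! ### Space-time derivatives of fields -/

/-- The derivative of a time-dependent field along a space-time direction `v`. -/
def dir {d : ℕ} (v : ℝ × (Fin d → ℝ)) (g : ℝ → (Fin d → ℝ) → ℝ) (t : ℝ) (x : Fin d → ℝ) : ℝ :=
  fderiv ℝ (fun q : ℝ × (Fin d → ℝ) => g q.1 q.2) (t, x) v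

/-- The `C^n` property of a time-dependent field as a function on space-time. -/
abbrev Joint {d : ℕ} (n : WithTop ℕ∞) (g : ℝ → (Fin d → ℝ) → ℝ) : Prop :=
  ContDiff ℝ n fun q : ℝ × (Fin d → ℝ) => g q.1 q.2

section Helpers

variable {d : ℕ}

/-- For a jointly `C¹` field, the spatial derivative of a time slice is the space-time derivative along
a spatial basis vector. With `dt_eq_dir` this lets one chain rule, stated for `dir v`, serve both
`pd` and `dt`. -/
theorem pd_eq_dir {g : ℝ → (Fin d → ℝ) → ℝ} (hg : Joint 1 g) (i : Fin d) (t : ℝ)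
    (x : Fin d → ℝ) : pd i (g t) x = dir (0, Pi.single i 1) g t x := by
  have h1 : HasFDerivAt (fun q : ℝ × (Fin d → ℝ) => g q.1 q.2) _ (t, x) :=
    (hg.differentiable one_ne_zero (t, x)).hasFDerivAt
  have h2 : HasFDerivAt (fun y : Fin d → ℝ => (t, y)) (ContinuousLinearMap.inr ℝ ℝ (Fin d → ℝ)) x :=
    hasFDerivAt_prodMk_right t x
  have h3 : HasFDerivAt (g t) _ x := h1.comp x h2
  simp [pd, dir, h3.fderiv]

theorem hasDerivAt_dir {g : ℝ → (Fin d → ℝ) → ℝ} (hg : Joint 1 g) (t : ℝ)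
    (x : Fin d → ℝ) : HasDerivAt (fun s => g s x) (dir (1, 0) g t x) t := by
  have h1 : HasFDerivAt (fun q : ℝ × (Fin d → ℝ) => g q.1 q.2) _ (t, x) :=
    (hg.differentiable one_ne_zero (t, x)).hasFDerivAt
  have h2 : HasDerivAt (fun s : ℝ => (s, x)) (1, 0) t :=
    (hasDerivAt_id t).prodMk (hasDerivAt_const t x)
  exact h1.comp_hasDerivAt t h2

theorem dt_eq_dir {g : ℝ → (Fin d → ℝ) → ℝ} (hg : Joint 1 g) (t : ℝ)
    (x : Fin d → ℝ) : dt g t x = dir (1, 0) g t x :=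
  (hasDerivAt_dir hg t x).deriv

theorem Joint.slice {n : WithTop ℕ∞} {g : ℝ → (Fin d → ℝ) → ℝ} (hg : Joint n g) (t : ℝ) :
    ContDiff ℝ n (g t) :=
  hg.comp (contDiff_const.prodMk contDiff_id)

theorem Joint.dir {m n : WithTop ℕ∞} {g : ℝ → (Fin d → ℝ) → ℝ} (hg : Joint n g)
    (hmn : m + 1 ≤ n) (v : ℝ × (Fin d → ℝ)) : Joint m (dir v g) :=
  (hg.fderiv_right hmn).clm_apply contDiff_const

theorem Joint.pd {m n : WithTop ℕ∞} {g : ℝ → (Fin d → ℝ) → ℝ} (hg : Joint n g)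
    (hmn : m + 1 ≤ n) (i : Fin d) : Joint m (fun t x => pd i (g t) x) := by
  have h1 : (1 : WithTop ℕ∞) ≤ n := le_trans (by simp) hmn
  have : (fun t x => _root_.pd i (g t) x) = _root_.dir (0, Pi.single i 1) g := by
    funext t x; exact pd_eq_dir (hg.of_le h1) i t x
  rw [this]; exact hg.dir hmn _

theorem Joint.dt {m n : WithTop ℕ∞} {g : ℝ → (Fin d → ℝ) → ℝ} (hg : Joint n g)
    (hmn : m + 1 ≤ n) : Joint m (dt g) := by
  have h1 : (1 : WithTop ℕ∞) ≤ n := le_trans (by simp) hmn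
  have : _root_.dt g = _root_.dir (1, 0) g := by
    funext t x; exact dt_eq_dir (hg.of_le h1) t x
  rw [this]; exact hg.dir hmn _

theorem contDiff_pd {m n : WithTop ℕ∞} {g : (Fin d → ℝ) → ℝ} (hg : ContDiff ℝ n g)
    (hmn : m + 1 ≤ n) (i : Fin d) : ContDiff ℝ m (pd i g) :=
  (hg.fderiv_right hmn).clm_apply contDiff_const

theorem dir_comm {g : ℝ → (Fin d → ℝ) → ℝ} (hg : Joint 2 g) (v w : ℝ × (Fin d → ℝ))
    (t : ℝ) (x : Fin d → ℝ) : dir v (dir w g) t x = dir w (dir v g) t x := by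
  have h2 : DifferentiableAt ℝ (fderiv ℝ fun q : ℝ × (Fin d → ℝ) => g q.1 q.2) (t, x) :=
    (hg.fderiv_right (m := 1) (by norm_num)).differentiable one_ne_zero _
  have key : ∀ v w, dir v (dir w g) t x
      = fderiv ℝ (fderiv ℝ fun q : ℝ × (Fin d → ℝ) => g q.1 q.2) (t, x) v w := by
    intro v w
    have := h2.hasFDerivAt.clm_apply (hasFDerivAt_const w (t, x))
    change fderiv ℝ (fun q => fderiv ℝ (fun q : ℝ × (Fin d → ℝ) => g q.1 q.2) q w) (t, x) v = _
    rw [this.fderiv]; simp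
  rw [key, key]
  exact (hg.contDiffAt.isSymmSndFDerivAt (by simp)) v w

/-! ### Leibniz rules for spatial derivatives -/

theorem pd_add {g h : (Fin d → ℝ) → ℝ} (hg : ContDiff ℝ 1 g) (hh : ContDiff ℝ 1 h) (i : Fin d)
    (x : Fin d → ℝ) : pd i (fun y => g y + h y) x = pd i g x + pd i h x := by
  have := (hg.differentiable one_ne_zero x).hasFDerivAt.fun_add
    (hh.differentiable one_ne_zero x).hasFDerivAt
  simp only [pd]
  rw [HasFDerivAt.fderiv this]; simp

theorem pd_sub {g h : (Fin d → ℝ) → ℝ} (hg : ContDiff ℝ 1 g) (hh : ContDiff ℝ 1 h) (i : Fin d)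
    (x : Fin d → ℝ) : pd i (fun y => g y - h y) x = pd i g x - pd i h x := by
  have := (hg.differentiable one_ne_zero x).hasFDerivAt.fun_sub
    (hh.differentiable one_ne_zero x).hasFDerivAt
  simp only [pd]
  rw [HasFDerivAt.fderiv this]; simp

theorem pd_mul {g h : (Fin d → ℝ) → ℝ} (hg : ContDiff ℝ 1 g) (hh : ContDiff ℝ 1 h) (i : Fin d)
    (x : Fin d → ℝ) : pd i (fun y => g y * h y) x = pd i g x * h x + g x * pd i h x := by
  have := (hg.differentiable one_ne_zero x).hasFDerivAt.fun_mul
    (hh.differentiable one_ne_zero x).hasFDerivAt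
  simp only [pd]
  rw [HasFDerivAt.fderiv this]; simp; ring

theorem pd_const (c : ℝ) (i : Fin d) (x : Fin d → ℝ) : pd i (fun _ => c) x = 0 := by
  simp [pd]

theorem pd_sum {ι : Type*} (s : Finset ι) {g : ι → (Fin d → ℝ) → ℝ}
    (hg : ∀ j, ContDiff ℝ 1 (g j)) (i : Fin d) (x : Fin d → ℝ) :
    pd i (fun y => ∑ j ∈ s, g j y) x = ∑ j ∈ s, pd i (g j) x := by
  have := HasFDerivAt.fun_sum (u := s)
    (fun j _ => ((hg j).differentiable one_ne_zero x).hasFDerivAt)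
  simp only [pd]
  rw [HasFDerivAt.fderiv this]; simp

/-! ### Integration over the box -/

theorem box_eq_Icc (L : Fin d → ℝ) : box L = Set.Icc 0 L := by
  rw [box, ← Set.pi_univ_Icc]; rfl

theorem isCompact_box (L : Fin d → ℝ) : IsCompact (box L) := by
  rw [box_eq_Icc]; exact isCompact_Icc

theorem mem_frontier_box {L : Fin d → ℝ} {x : Fin d → ℝ} (hx : x ∈ box L) {i : Fin d}
    (hi : x i = 0 ∨ x i = L i) : x ∈ frontier (box L) := by
  refine ⟨subset_closure hx, fun h => ?_⟩
  rw [box, interior_pi_set Set.finite_univ] at h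
  have := h i trivial
  simp only [interior_Icc] at this
  rcases hi with h0 | h0 <;> rw [h0] at this <;> simp at this

theorem integrableOn_box {L : Fin d → ℝ} {g : (Fin d → ℝ) → ℝ} (hg : Continuous g) :
    IntegrableOn g (box L) :=
  hg.continuousOn.integrableOn_compact (isCompact_box L)

/-- The integral over the box of the divergence of a `C¹` field with vanishing normal component on
each face is zero. -/
theorem integral_divg_eq_zero (hd : d ≠ 0) {L : Fin d → ℝ} (hL : ∀ i, 0 < L i)
    {V : (Fin d → ℝ) → Fin d → ℝ} (hV : ∀ i, ContDiff ℝ 1 fun y => V y i)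
    (hbd : ∀ x ∈ box L, ∀ i, (x i = 0 ∨ x i = L i) → V x i = 0) :
    ∫ x in box L, divg V x = 0 := by
  obtain ⟨n, rfl⟩ := Nat.exists_eq_succ_of_ne_zero hd
  have hle : (0 : Fin (n + 1) → ℝ) ≤ L := fun i => (hL i).le
  rw [box_eq_Icc] at *
  have key := integral_divergence_of_hasFDerivAt_off_countable' (0 : Fin (n + 1) → ℝ) L hle
    (fun i y => V y i) (fun i y => fderiv ℝ (fun y => V y i) y) ∅ Set.countable_empty
    (fun i => (hV i).continuous.continuousOn)
    (fun x _ i => ((hV i).differentiable one_ne_zero x).hasFDerivAt)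
    (by
      apply ContinuousOn.integrableOn_compact isCompact_Icc
      apply Continuous.continuousOn
      exact continuous_finsetSum _ fun i _ => (contDiff_pd (m := 0) (hV i) (by simp) i).continuous)
  change ∫ x in Set.Icc 0 L, ∑ i, fderiv ℝ (fun y => V y i) x (Pi.single i 1) = 0
  rw [key]
  refine Finset.sum_eq_zero fun i _ => ?_
  have hface : ∀ c : ℝ, (c = 0 ∨ c = L i) → ∀ y ∈ Set.Icc ((0 : Fin (n + 1) → ℝ) ∘ i.succAbove)
      (L ∘ i.succAbove), V (i.insertNth c y) i = 0 := by
    intro c hc y hy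
    refine hbd _ ?_ i (by simpa using hc)
    rw [Fin.insertNth_mem_Icc]
    refine ⟨?_, hy⟩
    rcases hc with rfl | rfl
    · exact ⟨le_rfl, (hL i).le⟩
    · exact ⟨(hL i).le, le_rfl⟩
  rw [setIntegral_congr_fun measurableSet_Icc (hface (L i) (Or.inr rfl)),
    setIntegral_congr_fun measurableSet_Icc (hface ((0 : Fin (n + 1) → ℝ) i) (Or.inl rfl))]
  simp

theorem hasDerivAt_integral_box {L : Fin d → ℝ} {g : ℝ → (Fin d → ℝ) → ℝ} (hg : Joint 1 g)
    (t : ℝ) : HasDerivAt (fun s => ∫ x in box L, g s x) (∫ x in box L, dt g t x) t := by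
  have hdt : Joint 0 (dt g) := hg.dt (by simp)
  have hdtc : Continuous fun q : ℝ × (Fin d → ℝ) => dt g q.1 q.2 := hdt.continuous
  have hcpt : IsCompact (Metric.closedBall t 1 ×ˢ box L) :=
    (isCompact_closedBall t 1).prod (isCompact_box L)
  obtain ⟨C, hC⟩ := hcpt.exists_bound_of_continuousOn hdtc.continuousOn
  have hbm : MeasurableSet (box L) := (isCompact_box L).measurableSet
  refine (hasDerivAt_integral_of_dominated_loc_of_deriv_le (F := g) (F' := dt g)
    (bound := fun _ => C) (Metric.ball_mem_nhds t one_pos) ?_ ?_ ?_ ?_ ?_ ?_).2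
  · exact Filter.Eventually.of_forall fun s => (hg.slice s).continuous.aestronglyMeasurable
  · exact integrableOn_box (hg.slice t).continuous
  · exact (hdt.slice t).continuous.aestronglyMeasurable
  · refine (ae_restrict_iff' hbm).2 (Filter.Eventually.of_forall fun x hx s hs => ?_)
    exact hC (s, x) ⟨Metric.ball_subset_closedBall hs, hx⟩
  · exact integrableOn_box continuous_const
  · refine Filter.Eventually.of_forall fun x s _ => ?_
    rw [dt_eq_dir hg]; exact hasDerivAt_dir hg s x

/-! ### Chain rules for the thermodynamic densities -/

theorem dir_sub {g h : ℝ → (Fin d → ℝ) → ℝ} (hg : Joint 1 g) (hh : Joint 1 h)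
    (v : ℝ × (Fin d → ℝ)) (t : ℝ) (x : Fin d → ℝ) :
    dir v (fun t x => g t x - h t x) t x = dir v g t x - dir v h t x := by
  have := (hg.differentiable one_ne_zero (t, x)).hasFDerivAt.fun_sub
    (hh.differentiable one_ne_zero (t, x)).hasFDerivAt
  simp only [dir]
  rw [HasFDerivAt.fderiv this]; simp

theorem dir_mul {g h : ℝ → (Fin d → ℝ) → ℝ} (hg : Joint 1 g) (hh : Joint 1 h)
    (v : ℝ × (Fin d → ℝ)) (t : ℝ) (x : Fin d → ℝ) :
    dir v (fun t x => g t x * h t x) t x = dir v g t x * h t x + g t x * dir v h t x := by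
  have := (hg.differentiable one_ne_zero (t, x)).hasFDerivAt.fun_mul
    (hh.differentiable one_ne_zero (t, x)).hasFDerivAt
  simp only [dir]
  rw [HasFDerivAt.fderiv this]; simp; ring

section FreeEnergy

variable {f : ℝ → ℝ → ℝ}

theorem joint_fderiv_f
    (hf : ContDiffOn ℝ 2 (fun q : ℝ × ℝ => f q.1 q.2) (Set.univ ×ˢ Set.Ioi 0))
    {φ θ : ℝ → (Fin d → ℝ) → ℝ} (hφ : Joint 1 φ) (hθ : Joint 1 θ) (hpos : ∀ t x, 0 < θ t x)
    (w : ℝ × ℝ) :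
    Joint 1 (fun t x => fderiv ℝ (fun q : ℝ × ℝ => f q.1 q.2) (φ t x, θ t x) w) := by
  have hU : IsOpen ((Set.univ : Set ℝ) ×ˢ Set.Ioi (0 : ℝ)) := isOpen_univ.prod isOpen_Ioi
  have h1 := hf.fderiv_of_isOpen hU (m := 1) (by norm_num)
  have h2 := h1.comp_contDiff (f := fun q : ℝ × (Fin d → ℝ) => (φ q.1 q.2, θ q.1 q.2))
    (hφ.prodMk hθ) (fun q => ⟨trivial, hpos _ _⟩)
  exact h2.clm_apply contDiff_const

theorem joint_f
    (hf : ContDiffOn ℝ 2 (fun q : ℝ × ℝ => f q.1 q.2) (Set.univ ×ˢ Set.Ioi 0))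
    {φ θ : ℝ → (Fin d → ℝ) → ℝ} (hφ : Joint 1 φ) (hθ : Joint 1 θ) (hpos : ∀ t x, 0 < θ t x) :
    Joint 1 (fun t x => f (φ t x) (θ t x)) :=
  (hf.of_le (by norm_num)).comp_contDiff
    (f := fun q : ℝ × (Fin d → ℝ) => (φ q.1 q.2, θ q.1 q.2))
    (hφ.prodMk hθ) (fun q => ⟨trivial, hpos _ _⟩)

theorem differentiableAt_f
    (hf : ContDiffOn ℝ 2 (fun q : ℝ × ℝ => f q.1 q.2) (Set.univ ×ˢ Set.Ioi 0))
    (a : ℝ) {b : ℝ} (hb : 0 < b) : DifferentiableAt ℝ (fun q : ℝ × ℝ => f q.1 q.2) (a, b) :=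
  (hf.contDiffAt ((isOpen_univ.prod isOpen_Ioi).mem_nhds
    (⟨trivial, hb⟩ : (a, b) ∈ Set.univ ×ˢ Set.Ioi (0 : ℝ)))).differentiableAt
    two_ne_zero

theorem deriv_f_snd
    (hf : ContDiffOn ℝ 2 (fun q : ℝ × ℝ => f q.1 q.2) (Set.univ ×ˢ Set.Ioi 0))
    (a : ℝ) {b : ℝ} (hb : 0 < b) :
    deriv (f a) b = fderiv ℝ (fun q : ℝ × ℝ => f q.1 q.2) (a, b) (0, 1) := by
  have h2 : HasDerivAt (fun s : ℝ => (a, s)) (0, 1) b :=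
    (hasDerivAt_const b a).prodMk (hasDerivAt_id b)
  exact ((differentiableAt_f hf a hb).hasFDerivAt.comp_hasDerivAt b h2).deriv

theorem deriv_f_fst
    (hf : ContDiffOn ℝ 2 (fun q : ℝ × ℝ => f q.1 q.2) (Set.univ ×ˢ Set.Ioi 0))
    (a : ℝ) {b : ℝ} (hb : 0 < b) :
    deriv (fun s => f s b) a = fderiv ℝ (fun q : ℝ × ℝ => f q.1 q.2) (a, b) (1, 0) := by
  have h2 : HasDerivAt (fun s : ℝ => (s, b)) (1, 0) a :=
    (hasDerivAt_id a).prodMk (hasDerivAt_const a b)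
  exact ((differentiableAt_f hf a hb).hasFDerivAt.comp_hasDerivAt a h2).deriv

theorem joint_deriv_snd
    (hf : ContDiffOn ℝ 2 (fun q : ℝ × ℝ => f q.1 q.2) (Set.univ ×ˢ Set.Ioi 0))
    {φ θ : ℝ → (Fin d → ℝ) → ℝ} (hφ : Joint 1 φ) (hθ : Joint 1 θ) (hpos : ∀ t x, 0 < θ t x) :
    Joint 1 (fun t x => deriv (f (φ t x)) (θ t x)) := by
  simp only [deriv_f_snd hf _ (hpos _ _)]
  exact joint_fderiv_f hf hφ hθ hpos _

theorem joint_deriv_fst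
    (hf : ContDiffOn ℝ 2 (fun q : ℝ × ℝ => f q.1 q.2) (Set.univ ×ˢ Set.Ioi 0))
    {φ θ : ℝ → (Fin d → ℝ) → ℝ} (hφ : Joint 1 φ) (hθ : Joint 1 θ) (hpos : ∀ t x, 0 < θ t x) :
    Joint 1 (fun t x => deriv (fun a => f a (θ t x)) (φ t x)) := by
  simp only [deriv_f_fst hf _ (hpos _ _)]
  exact joint_fderiv_f hf hφ hθ hpos _

theorem dir_f
    (hf : ContDiffOn ℝ 2 (fun q : ℝ × ℝ => f q.1 q.2) (Set.univ ×ˢ Set.Ioi 0))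
    {φ θ : ℝ → (Fin d → ℝ) → ℝ} (hφ : Joint 1 φ) (hθ : Joint 1 θ) (hpos : ∀ t x, 0 < θ t x)
    (v : ℝ × (Fin d → ℝ)) (t : ℝ) (x : Fin d → ℝ) :
    dir v (fun t x => f (φ t x) (θ t x)) t x
      = deriv (fun a => f a (θ t x)) (φ t x) * dir v φ t x
        + deriv (f (φ t x)) (θ t x) * dir v θ t x := by
  have h1 := (hφ.differentiable one_ne_zero (t, x)).hasFDerivAt.prodMk
    (hθ.differentiable one_ne_zero (t, x)).hasFDerivAt
  have h2 := (differentiableAt_f hf (φ t x) (hpos t x)).hasFDerivAt.comp (t, x) h1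
  rw [deriv_f_fst hf _ (hpos t x), deriv_f_snd hf _ (hpos t x)]
  set F := fderiv ℝ (fun q : ℝ × ℝ => f q.1 q.2) (φ t x, θ t x)
  have h3 : dir v (fun t x => f (φ t x) (θ t x)) t x = F (dir v φ t x, dir v θ t x) := by
    simp only [dir]
    change fderiv ℝ ((fun q : ℝ × ℝ => f q.1 q.2) ∘ fun q : ℝ × (Fin d → ℝ) =>
      (φ q.1 q.2, θ q.1 q.2)) (t, x) v = _
    rw [h2.fderiv]; rfl
  rw [h3]
  have h4 : (dir v φ t x, dir v θ t x)
      = dir v φ t x • ((1, 0) : ℝ × ℝ) + dir v θ t x • ((0, 1) : ℝ × ℝ) := by simp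
  rw [h4, map_add, map_smul, map_smul, smul_eq_mul, smul_eq_mul]; ring

theorem joint_intE
    (hf : ContDiffOn ℝ 2 (fun q : ℝ × ℝ => f q.1 q.2) (Set.univ ×ˢ Set.Ioi 0))
    {φ θ : ℝ → (Fin d → ℝ) → ℝ} (hφ : Joint 1 φ) (hθ : Joint 1 θ) (hpos : ∀ t x, 0 < θ t x) :
    Joint 1 (intE f φ θ) :=
  (joint_f hf hφ hθ hpos).sub (hθ.mul (joint_deriv_snd hf hφ hθ hpos))

/-- Gibbs relation `de = ∂_φ f dφ - θ d(∂_θ f)`. -/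
theorem dir_intE
    (hf : ContDiffOn ℝ 2 (fun q : ℝ × ℝ => f q.1 q.2) (Set.univ ×ˢ Set.Ioi 0))
    {φ θ : ℝ → (Fin d → ℝ) → ℝ} (hφ : Joint 1 φ) (hθ : Joint 1 θ) (hpos : ∀ t x, 0 < θ t x)
    (v : ℝ × (Fin d → ℝ)) (t : ℝ) (x : Fin d → ℝ) :
    dir v (intE f φ θ) t x = deriv (fun a => f a (θ t x)) (φ t x) * dir v φ t x
      - θ t x * dir v (fun t x => deriv (f (φ t x)) (θ t x)) t x := by
  have hH := joint_deriv_snd hf hφ hθ hpos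
  have h1 := dir_sub (h := fun t x => θ t x * deriv (f (φ t x)) (θ t x))
    (joint_f hf hφ hθ hpos) (hθ.mul hH) v t x
  rw [dir_mul hθ hH, dir_f hf hφ hθ hpos] at h1
  refine h1.trans ?_
  ring

end FreeEnergy

section Gradient

variable {G : (Fin d → ℝ) → ℝ}

theorem joint_G (hG : ContDiff ℝ 2 G) {φ : ℝ → (Fin d → ℝ) → ℝ} (hφ : Joint 2 φ) :
    Joint 1 (fun t x => G (grad (φ t) x)) :=
  (hG.of_le (by norm_num)).comp
    (contDiff_pi.2 fun i => hφ.pd (m := 1) (by norm_num) i)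

theorem joint_gradG (hG : ContDiff ℝ 2 G) {φ : ℝ → (Fin d → ℝ) → ℝ} (hφ : Joint 2 φ)
    (i : Fin d) : Joint 1 (fun t x => grad G (grad (φ t) x) i) :=
  (contDiff_pd (m := 1) hG (by norm_num) i).comp
    (contDiff_pi.2 fun i => hφ.pd (m := 1) (by norm_num) i)

theorem dir_G (hG : ContDiff ℝ 2 G) {φ : ℝ → (Fin d → ℝ) → ℝ} (hφ : Joint 2 φ)
    (v : ℝ × (Fin d → ℝ)) (t : ℝ) (x : Fin d → ℝ) :
    dir v (fun t x => G (grad (φ t) x)) t x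
      = ∑ i, grad G (grad (φ t) x) i * dir v (fun t x => pd i (φ t) x) t x := by
  have h1 : HasFDerivAt (fun q : ℝ × (Fin d → ℝ) => grad (φ q.1) q.2) _ (t, x) :=
    hasFDerivAt_pi.2 fun i =>
      ((hφ.pd (m := 1) (by norm_num) i).differentiable one_ne_zero (t, x)).hasFDerivAt
  have h2 := (hG.differentiable two_ne_zero (grad (φ t) x)).hasFDerivAt.comp (t, x) h1
  have h3 : dir v (fun t x => G (grad (φ t) x)) t x
      = fderiv ℝ G (grad (φ t) x) (fun i => dir v (fun t x => pd i (φ t) x) t x) := by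
    simp only [dir]
    change fderiv ℝ (G ∘ fun q : ℝ × (Fin d → ℝ) => grad (φ q.1) q.2) (t, x) v = _
    rw [h2.fderiv]; rfl
  rw [h3]
  conv_lhs => rw [← Finset.univ_sum_single (fun i => dir v (fun t x => pd i (φ t) x) t x)]
  rw [map_sum]
  refine Finset.sum_congr rfl fun i _ => ?_
  have hs : ∀ c : ℝ, (Pi.single i c : Fin d → ℝ) = c • Pi.single i 1 := fun c => by
    rw [← Pi.single_smul, smul_eq_mul, mul_one]
  rw [hs, map_smul, smul_eq_mul, mul_comm]
  rfl

theorem joint_entS (hG : ContDiff ℝ 2 G) {f : ℝ → ℝ → ℝ}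
    (hf : ContDiffOn ℝ 2 (fun q : ℝ × ℝ => f q.1 q.2) (Set.univ ×ˢ Set.Ioi 0))
    {φ θ : ℝ → (Fin d → ℝ) → ℝ} (hφ : Joint 2 φ) (hθ : Joint 1 θ) (hpos : ∀ t x, 0 < θ t x) :
    Joint 1 (entS G f φ θ) :=
  (joint_G hG hφ).neg.sub (joint_deriv_snd hf (hφ.of_le (by norm_num)) hθ hpos)

theorem dir_entS (hG : ContDiff ℝ 2 G) {f : ℝ → ℝ → ℝ}
    (hf : ContDiffOn ℝ 2 (fun q : ℝ × ℝ => f q.1 q.2) (Set.univ ×ˢ Set.Ioi 0))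
    {φ θ : ℝ → (Fin d → ℝ) → ℝ} (hφ : Joint 2 φ) (hθ : Joint 1 θ) (hpos : ∀ t x, 0 < θ t x)
    (v : ℝ × (Fin d → ℝ)) (t : ℝ) (x : Fin d → ℝ) :
    dir v (entS G f φ θ) t x
      = -(∑ i, grad G (grad (φ t) x) i * dir v (fun t x => pd i (φ t) x) t x)
        - dir v (fun t x => deriv (f (φ t x)) (θ t x)) t x := by
  have hφ1 : Joint 1 φ := hφ.of_le (by norm_num)
  have h1 := dir_sub (g := fun t x => -G (grad (φ t) x)) (joint_G hG hφ).neg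
    (joint_deriv_snd hf hφ1 hθ hpos) v t x
  refine h1.trans ?_
  rw [← dir_G hG hφ]
  congr 1
  simp only [dir]
  rw [fderiv_fun_neg]; rfl

end Gradient

theorem joint_totE {f : ℝ → ℝ → ℝ}
    (hf : ContDiffOn ℝ 2 (fun q : ℝ × ℝ => f q.1 q.2) (Set.univ ×ˢ Set.Ioi 0))
    {φ θ : ℝ → (Fin d → ℝ) → ℝ} {u : ℝ → (Fin d → ℝ) → Fin d → ℝ}
    (hφ : Joint 1 φ) (hθ : Joint 1 θ) (hpos : ∀ t x, 0 < θ t x)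
    (hu : ∀ j, Joint 1 fun t x => u t x j) :
    Joint 1 (totE f φ θ u) :=
  (joint_intE hf hφ hθ hpos).add (contDiff_const.mul (ContDiff.sum fun j _ => (hu j).pow 2))

theorem dir_totE {f : ℝ → ℝ → ℝ}
    (hf : ContDiffOn ℝ 2 (fun q : ℝ × ℝ => f q.1 q.2) (Set.univ ×ˢ Set.Ioi 0))
    {φ θ : ℝ → (Fin d → ℝ) → ℝ} {u : ℝ → (Fin d → ℝ) → Fin d → ℝ}
    (hφ : Joint 1 φ) (hθ : Joint 1 θ) (hpos : ∀ t x, 0 < θ t x)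
    (hu : ∀ j, Joint 1 fun t x => u t x j) (v : ℝ × (Fin d → ℝ)) (t : ℝ) (x : Fin d → ℝ) :
    dir v (totE f φ θ u) t x
      = dir v (intE f φ θ) t x + ∑ j, u t x j * dir v (fun t x => u t x j) t x := by
  have h0 := ((joint_intE hf hφ hθ hpos).differentiable one_ne_zero (t, x)).hasFDerivAt
  have h1 := HasFDerivAt.fun_sum (u := Finset.univ)
    (fun j _ => HasFDerivAt.pow ((hu j).differentiable one_ne_zero (t, x)).hasFDerivAt 2)
  have h2 := h0.fun_add (h1.const_mul (1 / 2 : ℝ))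
  have h3 : dir v (totE f φ θ u) t x = _ := congrArg (fun A => A v) h2.fderiv
  rw [h3]
  simp [dir, Finset.mul_sum]
  refine Finset.sum_congr rfl fun j _ => by ring

/-! ### The pointwise balance -/

/-- Pointwise entropy balance `θ Dₜs = Dₜe + σ̃:∇u - θ ∇G·∇(Dₜφ) - ∂_φf Dₜφ`, in terms of the values
of the derivatives at a point; `Dₜ` is the material derivative. -/
theorem entropy_algebra {θ fφ φt Ht et St B : ℝ} {u φx Hx ex Sx g φdt Bx : Fin d → ℝ}
    {φd ux σ : Fin d → Fin d → ℝ}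
    (hSt : St = -(∑ i, g i * φdt i) - Ht)
    (hSx : ∀ k, Sx k = -(∑ i, g i * φd k i) - Hx k)
    (het : et = fφ * φt - θ * Ht) (hex : ∀ k, ex k = fφ * φx k - θ * Hx k)
    (hB : B = φt + ∑ k, u k * φx k)
    (hBx : ∀ i, Bx i = φdt i + ∑ k, (ux i k * φx k + u k * φd k i))
    (hσ : ∀ i j, σ i j = θ * g i * φx j) :
    θ * (St + ∑ k, u k * Sx k) = (et + ∑ k, u k * ex k) + ∑ i, ∑ j, σ i j * ux i j
      - θ * ∑ i, g i * Bx i - fφ * B := by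
  have h1 : ∑ k, u k * Sx k = -(∑ i, ∑ k, g i * (u k * φd k i)) - ∑ k, u k * Hx k := by
    rw [Finset.sum_comm, ← Finset.sum_neg_distrib, ← Finset.sum_sub_distrib]
    refine Finset.sum_congr rfl fun k _ => ?_
    rw [hSx, mul_sub, mul_neg, Finset.mul_sum]
    congr 2
    exact Finset.sum_congr rfl fun i _ => by ring
  have h2 : ∑ k, u k * ex k = fφ * ∑ k, u k * φx k - θ * ∑ k, u k * Hx k := by
    rw [Finset.mul_sum, Finset.mul_sum, ← Finset.sum_sub_distrib]
    exact Finset.sum_congr rfl fun k _ => by rw [hex]; ring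
  have h3 : ∑ i, g i * Bx i = ∑ i, g i * φdt i + ∑ i, ∑ k, g i * (ux i k * φx k)
      + ∑ i, ∑ k, g i * (u k * φd k i) := by
    rw [← Finset.sum_add_distrib, ← Finset.sum_add_distrib]
    refine Finset.sum_congr rfl fun i _ => ?_
    rw [hBx, mul_add, Finset.mul_sum, add_assoc, ← Finset.sum_add_distrib]
    congr 1
    exact Finset.sum_congr rfl fun k _ => by ring
  have h4 : ∑ i, ∑ j, σ i j * ux i j = θ * ∑ i, ∑ k, g i * (ux i k * φx k) := by
    rw [Finset.mul_sum]
    refine Finset.sum_congr rfl fun i _ => ?_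
    rw [Finset.mul_sum]
    exact Finset.sum_congr rfl fun k _ => by rw [hσ]; ring
  rw [h1, h2, h3, h4, hSt, het, hB]
  ring

/-- Pointwise exergy balance in terms of the values of the derivatives at a point. The last sum
is the divergence of the exergy flux `exFlux`, written out by `pd_flux`. -/
theorem exergy_algebra {θ θb fφ et St B Qv m k p μ η Y2 E : ℝ}
    {u ut ex Sx g gx Bx bv rx q qx px : Fin d → ℝ} {ux σ σx N Nx : Fin d → Fin d → ℝ}
    (hθ : θ ≠ 0)
    (hdiv : ∑ i, ux i i = 0)
    (hIE : et + ∑ i, u i * ex i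
      = -(∑ i, qx i) + η * Y2 - (∑ i, ∑ j, σ i j * ux i j) + Qv)
    (hNS : ∀ j, ut j + ∑ i, u i * ux i j = (∑ i, Nx i j) - px j - (∑ i, σx i j) + bv j)
    (hEnt : θ * (St + ∑ i, u i * Sx i) = (et + ∑ i, u i * ex i) + ∑ i, ∑ j, σ i j * ux i j
      - θ * ∑ i, g i * Bx i - fφ * B)
    (hμ : μ = -θ * (∑ i, gx i) + fφ) (hB : B = -m * μ / θ)
    (hq : ∀ i, q i = k * rx i)
    (hN : ∑ i, ∑ j, N i j * ux i j = η * Y2) :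
    et + (∑ j, u j * ut j) - θb * St
      = -θb * (m * (μ / θ) ^ 2 + k * (∑ i, rx i ^ 2) + η / θ * Y2) + Qv * (1 - θb / θ)
        + (∑ j, bv j * u j)
        - ∑ i, ((ux i i * E + u i * (ex i + (∑ j, u j * ux i j) - θb * Sx i))
          + (-(θb * rx i) * q i + (1 - θb * θ⁻¹) * qx i)
          - (∑ j, ((Nx i j - σx i j) * u j + (N i j - σ i j) * ux i j))
          + (px i * u i + p * ux i i)
          - θb * (gx i * B + g i * Bx i)) := by
  -- kinetic energy: test the momentum equation with `u`
  have hkin : ∑ j, u j * ut j = (∑ i, ∑ j, Nx i j * u j) - (∑ j, px j * u j)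
      - (∑ i, ∑ j, σx i j * u j) + (∑ j, bv j * u j) - ∑ i, u i * ∑ j, u j * ux i j := by
    have h1 : ∀ j, u j * ut j = (∑ i, Nx i j * u j) - px j * u j - (∑ i, σx i j * u j)
        + bv j * u j - ∑ i, u i * (u j * ux i j) := by
      intro j
      have h2 : ut j = (∑ i, Nx i j) - px j - (∑ i, σx i j) + bv j - ∑ i, u i * ux i j := by
        linarith [hNS j]
      have h3 : ∑ i, u i * (u j * ux i j) = u j * ∑ i, u i * ux i j := by
        rw [Finset.mul_sum]; exact Finset.sum_congr rfl fun i _ => by ring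
      rw [h2, h3, ← Finset.sum_mul, ← Finset.sum_mul]; ring
    simp only [h1, Finset.sum_add_distrib, Finset.sum_sub_distrib, Finset.mul_sum]
    rw [Finset.sum_comm (f := fun j i => Nx i j * u j),
      Finset.sum_comm (f := fun j i => σx i j * u j),
      Finset.sum_comm (f := fun j i => u i * (u j * ux i j))]
  have hrq : ∑ i, rx i * q i = k * ∑ i, rx i ^ 2 := by
    rw [Finset.mul_sum]; exact Finset.sum_congr rfl fun i _ => by rw [hq]; ring
  have hflux : ∑ i, ((ux i i * E + u i * (ex i + (∑ j, u j * ux i j) - θb * Sx i))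
          + (-(θb * rx i) * q i + (1 - θb * θ⁻¹) * qx i)
          - (∑ j, ((Nx i j - σx i j) * u j + (N i j - σ i j) * ux i j))
          + (px i * u i + p * ux i i)
          - θb * (gx i * B + g i * Bx i))
      = (∑ i, ux i i) * E + (∑ i, u i * ex i) + (∑ i, u i * ∑ j, u j * ux i j)
        - θb * (∑ i, u i * Sx i) - θb * (∑ i, rx i * q i) + (1 - θb * θ⁻¹) * (∑ i, qx i)
        - ((∑ i, ∑ j, Nx i j * u j) - (∑ i, ∑ j, σx i j * u j)
            + (∑ i, ∑ j, N i j * ux i j) - (∑ i, ∑ j, σ i j * ux i j))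
        + (∑ i, px i * u i) + p * (∑ i, ux i i)
        - θb * ((∑ i, gx i) * B + ∑ i, g i * Bx i) := by
    have h1 : ∀ i, (∑ j, ((Nx i j - σx i j) * u j + (N i j - σ i j) * ux i j))
        = (∑ j, Nx i j * u j) - (∑ j, σx i j * u j) + (∑ j, N i j * ux i j)
          - (∑ j, σ i j * ux i j) := by
      intro i
      rw [← Finset.sum_sub_distrib, ← Finset.sum_add_distrib, ← Finset.sum_sub_distrib]
      exact Finset.sum_congr rfl fun j _ => by ring
    have h2 : ∀ R₁ R₂ R₃ R₄ R₅ : Fin d → ℝ,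
        ∑ i, ((ux i i * E + u i * (ex i + R₅ i - θb * Sx i))
          + (-(θb * rx i) * q i + (1 - θb * θ⁻¹) * qx i)
          - (R₁ i - R₂ i + R₃ i - R₄ i) + (px i * u i + p * ux i i)
          - θb * (gx i * B + g i * Bx i))
        = (∑ i, ux i i) * E + (∑ i, u i * ex i) + (∑ i, u i * R₅ i)
          - θb * (∑ i, u i * Sx i) - θb * (∑ i, rx i * q i) + (1 - θb * θ⁻¹) * (∑ i, qx i)
          - ((∑ i, R₁ i) - (∑ i, R₂ i) + (∑ i, R₃ i) - (∑ i, R₄ i))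
          + (∑ i, px i * u i) + p * (∑ i, ux i i)
          - θb * ((∑ i, gx i) * B + ∑ i, g i * Bx i) := by
      intro R₁ R₂ R₃ R₄ R₅
      simp only [Finset.sum_mul, Finset.mul_sum, ← Finset.sum_add_distrib,
        ← Finset.sum_sub_distrib]
      exact Finset.sum_congr rfl fun i _ => by ring
    simp only [h1]
    exact h2 (fun i => ∑ j, Nx i j * u j) (fun i => ∑ j, σx i j * u j)
      (fun i => ∑ j, N i j * ux i j) (fun i => ∑ j, σ i j * ux i j) (fun i => ∑ j, u j * ux i j)
  rw [hflux, hkin, hdiv, hrq, hN]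
  have hS : St = (-(∑ i, qx i) + η * Y2 + Qv - fφ * B) / θ - (∑ i, g i * Bx i)
      - ∑ i, u i * Sx i := by
    field_simp
    linarith [hEnt, hIE]
  have hE : et = -(∑ i, qx i) + η * Y2 - (∑ i, ∑ j, σ i j * ux i j) + Qv - ∑ i, u i * ex i := by
    linarith
  have hf : fφ = μ + θ * ∑ i, gx i := by rw [hμ]; ring
  rw [hS, hE, hf, hB]
  field_simp
  ring

/-- The exergy flux: convection of the exergy density `E = e_tot - θ_b s`, heat flux weighted by
`1 - θ_b/θ`, work of the stresses and of the pressure, and the interfacial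
entropy flux `-θ_b ∇G(∇φ) Dₜφ`, with `Dₜφ = ∂ₜφ + u·∇φ`. -/
def exFlux (G : (Fin d → ℝ) → ℝ) (f K η : ℝ → ℝ → ℝ) (φ θ ptilde : ℝ → (Fin d → ℝ) → ℝ)
    (u : ℝ → (Fin d → ℝ) → Fin d → ℝ) (θb : ℝ) (t : ℝ) (y : Fin d → ℝ) (i : Fin d) : ℝ :=
  u t y i * (totE f φ θ u t y - θb * entS G f φ θ t y)
    + (1 - θb * (θ t y)⁻¹) * (K (φ t y) (θ t y) * pd i (fun z => (θ t z)⁻¹) y)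
    - (∑ j, (η (φ t y) (θ t y) * symGrad (u t) y i j - korteweg G φ θ t y i j) * u t y j)
    + ptilde t y * u t y i
    - θb * (grad G (grad (φ t) y) i * (dt φ t y + ∑ k, u t y k * pd k (φ t) y))

/-- Leibniz rule for a field with the structure of the components of `exFlux`. -/
theorem pd_flux {a E r q p g B : (Fin d → ℝ) → ℝ} {N σ u : Fin d → (Fin d → ℝ) → ℝ} {c : ℝ}
    (ha : ContDiff ℝ 1 a) (hE : ContDiff ℝ 1 E) (hr : ContDiff ℝ 1 r) (hq : ContDiff ℝ 1 q)
    (hp : ContDiff ℝ 1 p) (hg : ContDiff ℝ 1 g) (hB : ContDiff ℝ 1 B)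
    (hN : ∀ j, ContDiff ℝ 1 (N j)) (hσ : ∀ j, ContDiff ℝ 1 (σ j)) (hu : ∀ j, ContDiff ℝ 1 (u j))
    (i : Fin d) (x : Fin d → ℝ) :
    pd i (fun y => a y * E y + (1 - c * r y) * q y - (∑ j, (N j y - σ j y) * u j y)
        + p y * a y - c * (g y * B y)) x
      = (pd i a x * E x + a x * pd i E x) + (-(c * pd i r x) * q x + (1 - c * r x) * pd i q x)
        - (∑ j, ((pd i (N j) x - pd i (σ j) x) * u j x + (N j x - σ j x) * pd i (u j) x))
        + (pd i p x * a x + p x * pd i a x) - c * (pd i g x * B x + g x * pd i B x) := by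
  have hcr : ContDiff ℝ 1 fun y => c * r y := contDiff_const.mul hr
  have h1cr : ContDiff ℝ 1 fun y => 1 - c * r y := contDiff_const.sub hcr
  have hgB : ContDiff ℝ 1 fun y => g y * B y := hg.mul hB
  have hNσ : ∀ j, ContDiff ℝ 1 fun y => N j y - σ j y := fun j => (hN j).sub (hσ j)
  have hNσu : ∀ j, ContDiff ℝ 1 fun y => (N j y - σ j y) * u j y := fun j => (hNσ j).mul (hu j)
  have hS : ContDiff ℝ 1 fun y => ∑ j, (N j y - σ j y) * u j y := ContDiff.sum fun j _ => hNσu j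
  have k1 : ContDiff ℝ 1 fun y => a y * E y + (1 - c * r y) * q y :=
    (ha.mul hE).add (h1cr.mul hq)
  have k2 := k1.sub hS
  have k3 := k2.add (hp.mul ha)
  rw [pd_sub k3 (contDiff_const.mul hgB), pd_add k2 (hp.mul ha), pd_sub k1 hS,
    pd_add (ha.mul hE) (h1cr.mul hq), pd_mul ha hE, pd_mul h1cr hq, pd_sub contDiff_const hcr,
    pd_mul contDiff_const hr, pd_mul hp ha, pd_mul contDiff_const hgB, pd_mul hg hB,
    pd_sum _ hNσu]
  simp only [pd_mul (hNσ _) (hu _), pd_sub (hN _) (hσ _), pd_const]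
  ring

/-- Only the symmetric part of `∇w` contributes to `Dw : ∇w`. -/
theorem symGrad_contract (w : (Fin d → ℝ) → Fin d → ℝ) (x : Fin d → ℝ) :
    ∑ i, ∑ j, symGrad w x i j * pd i (fun y => w y j) x = ∑ i, ∑ j, symGrad w x i j ^ 2 := by
  have hs : ∀ i j, symGrad w x i j = symGrad w x j i := fun i j => by
    simp only [symGrad]; ring
  have h1 : ∑ i, ∑ j, symGrad w x i j * pd i (fun y => w y j) x
      = ∑ i, ∑ j, symGrad w x i j * pd j (fun y => w y i) x := by
    rw [Finset.sum_comm]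
    exact Finset.sum_congr rfl fun i _ => Finset.sum_congr rfl fun j _ => by rw [hs]
  have h2 : ∑ i, ∑ j, symGrad w x i j ^ 2
      = (∑ i, ∑ j, symGrad w x i j * pd i (fun y => w y j) x
        + ∑ i, ∑ j, symGrad w x i j * pd j (fun y => w y i) x) / 2 := by
    rw [← Finset.sum_add_distrib, Finset.sum_div]
    refine Finset.sum_congr rfl fun i _ => ?_
    rw [← Finset.sum_add_distrib, Finset.sum_div]
    refine Finset.sum_congr rfl fun j _ => ?_
    rw [sq]; nth_rewrite 2 [symGrad]; ring
  rw [h2, ← h1]; ring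

end Helpers

/-! ### Integration of the balance -/

/-- exergy dissipation balance for NACNS solutions with thermal
boundary conditions on the box `Ω`. -/
theorem nacns_exergy_dissipation
    {d : ℕ} (hd : d = 1 ∨ d = 2 ∨ d = 3)
    (T : ℝ) (hT : 0 < T) (L : Fin d → ℝ) (hL : ∀ i, 0 < L i)
    (G : (Fin d → ℝ) → ℝ) (hG : ContDiff ℝ 2 G)
    (f : ℝ → ℝ → ℝ)
    (hf : ContDiffOn ℝ 2 (fun q : ℝ × ℝ => f q.1 q.2) (Set.univ ×ˢ Set.Ioi 0))
    (M K η : ℝ → ℝ → ℝ)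
    (hM : ContDiff ℝ (⊤ : ℕ∞) fun q : ℝ × ℝ => M q.1 q.2) (hMpos : ∀ a b, 0 < M a b)
    (hK : ContDiff ℝ (⊤ : ℕ∞) fun q : ℝ × ℝ => K q.1 q.2) (hKpos : ∀ a b, 0 < K a b)
    (hη : ContDiff ℝ (⊤ : ℕ∞) fun q : ℝ × ℝ => η q.1 q.2) (hηpos : ∀ a b, 0 < η a b)
    (φ θ ptilde : ℝ → (Fin d → ℝ) → ℝ)
    (u : ℝ → (Fin d → ℝ) → Fin d → ℝ)
    (Q : ℝ → (Fin d → ℝ) → ℝ) (b : ℝ → (Fin d → ℝ) → Fin d → ℝ)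
    (hφ : ContDiff ℝ (⊤ : ℕ∞) fun q : ℝ × (Fin d → ℝ) => φ q.1 q.2)
    (hθsm : ContDiff ℝ (⊤ : ℕ∞) fun q : ℝ × (Fin d → ℝ) => θ q.1 q.2)
    (hpsm : ContDiff ℝ (⊤ : ℕ∞) fun q : ℝ × (Fin d → ℝ) => ptilde q.1 q.2)
    (husm : ContDiff ℝ (⊤ : ℕ∞) fun q : ℝ × (Fin d → ℝ) => u q.1 q.2)
    (hQsm : ContDiff ℝ (⊤ : ℕ∞) fun q : ℝ × (Fin d → ℝ) => Q q.1 q.2)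
    (hbsm : ContDiff ℝ (⊤ : ℕ∞) fun q : ℝ × (Fin d → ℝ) => b q.1 q.2)
    (hθpos : ∀ t x, 0 < θ t x)
    (θb : ℝ) (hθb : 0 < θb)
    -- thermal boundary conditions on ∂Ω
    (hubc : ∀ t ∈ Set.Icc (0 : ℝ) T, ∀ x ∈ frontier (box L), u t x = 0)
    (hθbc : ∀ t ∈ Set.Icc (0 : ℝ) T, ∀ x ∈ frontier (box L), θ t x = θb)
    (hGbc : ∀ t ∈ Set.Icc (0 : ℝ) T, ∀ x ∈ box L, ∀ i,
      (x i = 0 ∨ x i = L i) → grad G (grad (φ t) x) i = 0)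
    -- (AC): ∂ₜφ + u·∇φ = -Mμ/θ in Ω
    (hAC : ∀ t ∈ Set.Ioo (0 : ℝ) T, ∀ x ∈ box L,
      dt φ t x + dot (u t x) (grad (φ t) x)
        = -(M (φ t x) (θ t x)) * chemMu G f φ θ t x / θ t x)
    -- (IE): ∂ₜe + u·∇e = -div(K∇(1/θ)) + η|Du|² - σ̃:∇u + Q in Ω
    (hIE : ∀ t ∈ Set.Ioo (0 : ℝ) T, ∀ x ∈ box L,
      dt (intE f φ θ) t x + dot (u t x) (grad (intE f φ θ t) x)
        = -divg (fun y i => K (φ t y) (θ t y) * pd i (fun z => (θ t z)⁻¹) y) x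
          + η (φ t x) (θ t x) * (∑ i, ∑ j, (symGrad (u t) x i j) ^ 2)
          - (∑ i, ∑ j, korteweg G φ θ t x i j * pd i (fun y => u t y j) x)
          + Q t x)
    -- (NS): ∂ₜu + (u·∇)u = div(ηDu) - ∇p̃ - div(σ̃) + b in Ω
    (hNS : ∀ t ∈ Set.Ioo (0 : ℝ) T, ∀ x ∈ box L, ∀ j,
      dt (fun s y => u s y j) t x + ∑ i, u t x i * pd i (fun y => u t y j) x
        = (∑ i, pd i (fun y => η (φ t y) (θ t y) * symGrad (u t) y i j) x)
          - pd j (ptilde t) x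
          - (∑ i, pd i (fun y => korteweg G φ θ t y i j) x)
          + b t x j)
    -- (DF): div(u) = 0 in Ω
    (hDF : ∀ t ∈ Set.Ioo (0 : ℝ) T, ∀ x ∈ box L, divg (u t) x = 0) :
    (∀ t ∈ Set.Ioo (0 : ℝ) T,
      deriv (fun s => ∫ x in box L, (totE f φ θ u s x - θb * entS G f φ θ s x)) t
        = -θb * entProd L G f M K η φ θ u t
          + (∫ x in box L, Q t x * (1 - θb / θ t x))
          + ∫ x in box L, dot (b t x) (u t x)) ∧
    ((∀ t x, Q t x = 0) → (∀ t x, b t x = 0) →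
      ∀ t₁ ∈ Set.Ioo (0 : ℝ) T, ∀ t₂ ∈ Set.Ioo (0 : ℝ) T, t₁ ≤ t₂ →
        (∫ x in box L, (totE f φ θ u t₂ x - θb * entS G f φ θ t₂ x))
          ≤ ∫ x in box L, (totE f φ θ u t₁ x - θb * entS G f φ θ t₁ x)) := by
  have hd0 : d ≠ 0 := by rcases hd with rfl | rfl | rfl <;> norm_num
  have hbm : MeasurableSet (box L) := (isCompact_box L).measurableSet
  have htop : (((⊤ : ℕ∞) : WithTop ℕ∞) + 1) ≤ ((⊤ : ℕ∞) : WithTop ℕ∞) := by simp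
  have h1top : (1 : WithTop ℕ∞) ≤ ((⊤ : ℕ∞) : WithTop ℕ∞) := by exact_mod_cast le_top
  have h2top : (2 : WithTop ℕ∞) ≤ ((⊤ : ℕ∞) : WithTop ℕ∞) :=
    WithTop.coe_le_coe.2 (le_top : (2 : ℕ∞) ≤ ⊤)
  have hφ2 : Joint 2 φ := hφ.of_le h2top
  have hφ1 : Joint 1 φ := hφ.of_le h1top
  have hθ1 : Joint 1 θ := hθsm.of_le h1top
  have hp1 : Joint 1 ptilde := hpsm.of_le h1top
  have hui : ∀ j, Joint (⊤ : ℕ∞) fun t x => u t x j := fun j => contDiff_pi.1 husm j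
  have hu1 : ∀ j, Joint 1 fun t x => u t x j := fun j => (hui j).of_le h1top
  have hbi : ∀ j, Joint (⊤ : ℕ∞) fun t x => b t x j := fun j => contDiff_pi.1 hbsm j
  have hr : Joint (⊤ : ℕ∞) fun t x => (θ t x)⁻¹ := hθsm.inv fun q => (hθpos _ _).ne'
  have hr1 : Joint 1 fun t x => (θ t x)⁻¹ := hr.of_le h1top
  have hMj : Joint (⊤ : ℕ∞) fun t x => M (φ t x) (θ t x) := hM.comp (hφ.prodMk hθsm)
  have hKj : Joint (⊤ : ℕ∞) fun t x => K (φ t x) (θ t x) := hK.comp (hφ.prodMk hθsm)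
  have hηj : Joint (⊤ : ℕ∞) fun t x => η (φ t x) (θ t x) := hη.comp (hφ.prodMk hθsm)
  have hq : ∀ i, Joint 1 fun t x => K (φ t x) (θ t x) * pd i (fun z => (θ t z)⁻¹) x :=
    fun i => (hKj.mul (hr.pd htop i)).of_le h1top
  have hsym : ∀ i j, Joint (⊤ : ℕ∞) fun t x => symGrad (u t) x i j := fun i j =>
    (((hui j).pd htop i).add ((hui i).pd htop j)).div_const 2
  have hN : ∀ i j, Joint 1 fun t x => η (φ t x) (θ t x) * symGrad (u t) x i j :=
    fun i j => (hηj.mul (hsym i j)).of_le h1top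
  have hg : ∀ i, Joint 1 fun t x => grad G (grad (φ t) x) i := fun i => joint_gradG hG hφ2 i
  have hpdφ : ∀ i, Joint 1 fun t x => pd i (φ t) x := fun i => hφ2.pd (by norm_num) i
  have hdtφ : Joint 1 (dt φ) := hφ2.dt (by norm_num)
  have hσ : ∀ i j, Joint 1 fun t x => korteweg G φ θ t x i j :=
    fun i j => (hθ1.mul (hg i)).mul (hpdφ j)
  have hB : Joint 1 fun t x => dt φ t x + ∑ k, u t x k * pd k (φ t) x :=
    hdtφ.add (ContDiff.sum fun k _ => (hu1 k).mul (hpdφ k))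
  have he : Joint 1 (intE f φ θ) := joint_intE hf hφ1 hθ1 hθpos
  have hs : Joint 1 (entS G f φ θ) := joint_entS hG hf hφ2 hθ1 hθpos
  have htot : Joint 1 (totE f φ θ u) := joint_totE hf hφ1 hθ1 hθpos hu1
  have hθbs : Joint 1 fun t x => θb * entS G f φ θ t x := contDiff_const.mul hs
  have hE : Joint 1 fun t x => totE f φ θ u t x - θb * entS G f φ θ t x := htot.sub hθbs
  have hμ : Joint 0 (chemMu G f φ θ) :=
    (((hθ1.neg).of_le zero_le_one).mul (ContDiff.sum fun i _ => (hg i).pd (by simp) i)).add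
      ((joint_deriv_fst hf hφ1 hθ1 hθpos).of_le zero_le_one)
  have hFlux : ∀ t i, ContDiff ℝ 1 fun y => exFlux G f K η φ θ ptilde u θb t y i := by
    intro t i
    exact (((((hu1 i).slice t).mul (hE.slice t)).add
      ((contDiff_const.sub (contDiff_const.mul (hr1.slice t))).mul ((hq i).slice t))).sub
      (ContDiff.sum fun j _ => (((hN i j).slice t).sub ((hσ i j).slice t)).mul
        ((hu1 j).slice t))).add ((hp1.slice t).mul ((hu1 i).slice t)) |>.sub
      (contDiff_const.mul (((hg i).slice t).mul (hB.slice t)))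
  have hdirE : ∀ v t x, dir v (fun t x => totE f φ θ u t x - θb * entS G f φ θ t x) t x
      = dir v (intE f φ θ) t x + (∑ j, u t x j * dir v (fun t x => u t x j) t x)
        - θb * dir v (entS G f φ θ) t x := by
    intro v t x
    have h0 : dir v (fun _ _ => θb) t x = 0 := by simp [dir]
    rw [dir_sub htot hθbs, dir_totE hf hφ1 hθ1 hθpos hu1, dir_mul contDiff_const hs, h0]
    ring
  have hpoint : ∀ t ∈ Set.Ioo (0 : ℝ) T, ∀ x ∈ box L,
      dt (fun t x => totE f φ θ u t x - θb * entS G f φ θ t x) t x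
        = -θb * (M (φ t x) (θ t x) * (chemMu G f φ θ t x / θ t x) ^ 2
            + K (φ t x) (θ t x) * ∑ i, (pd i (fun z => (θ t z)⁻¹) x) ^ 2
            + η (φ t x) (θ t x) / θ t x * ∑ i, ∑ j, (symGrad (u t) x i j) ^ 2)
          + Q t x * (1 - θb / θ t x) + dot (b t x) (u t x)
          - divg (exFlux G f K η φ θ ptilde u θb t) x := by
    intro t ht x hx
    have hpdE : ∀ i, pd i (fun y => totE f φ θ u t y - θb * entS G f φ θ t y) x
        = pd i (intE f φ θ t) x + (∑ j, u t x j * pd i (fun y => u t y j) x)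
          - θb * pd i (entS G f φ θ t) x := by
      intro i
      rw [pd_eq_dir hE, hdirE, pd_eq_dir he, pd_eq_dir hs]
      simp only [pd_eq_dir (hu1 _)]
    have hdtE : dt (fun t x => totE f φ θ u t x - θb * entS G f φ θ t x) t x
        = dt (intE f φ θ) t x + (∑ j, u t x j * dt (fun s y => u s y j) t x)
          - θb * dt (entS G f φ θ) t x := by
      rw [dt_eq_dir hE, hdirE, dt_eq_dir he, dt_eq_dir hs]
      simp only [dt_eq_dir (hu1 _)]
    have hdiv : divg (exFlux G f K η φ θ ptilde u θb t) x = _ :=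
      Finset.sum_congr rfl fun i _ =>
        pd_flux ((hu1 i).slice t) (hE.slice t) (hr1.slice t) ((hq i).slice t) (hp1.slice t)
          ((hg i).slice t) (hB.slice t) (fun j => (hN i j).slice t) (fun j => (hσ i j).slice t)
          (fun j => (hu1 j).slice t) i x
    rw [hdtE, hdiv]
    simp only [hpdE, dot]
    have hpdφdir : ∀ i, (fun t x => pd i (φ t) x) = dir (0, Pi.single i 1) φ := fun i => by
      funext t x; exact pd_eq_dir hφ1 i t x
    have hdtφdir : dt φ = dir (1, 0) φ := by
      funext t x; exact dt_eq_dir hφ1 t x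
    refine exergy_algebra (fφ := deriv (fun a => f a (θ t x)) (φ t x))
      (ux := fun i j => pd i (fun y => u t y j) x)
      (σ := fun i j => korteweg G φ θ t x i j)
      (σx := fun i j => pd i (fun y => korteweg G φ θ t y i j) x)
      (N := fun i j => η (φ t x) (θ t x) * symGrad (u t) x i j)
      (Nx := fun i j => pd i (fun y => η (φ t y) (θ t y) * symGrad (u t) y i j) x)
      (g := fun i => grad G (grad (φ t) x) i)
      (gx := fun i => pd i (fun y => grad G (grad (φ t) y) i) x)
      (Bx := fun i => pd i (fun y => dt φ t y + ∑ k, u t y k * pd k (φ t) y) x)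
      (μ := chemMu G f φ θ t x) (m := M (φ t x) (θ t x)) (k := K (φ t x) (θ t x))
      (ut := fun j => dt (fun s y => u s y j) t x)
      (ex := fun i => pd i (intE f φ θ t) x)
      (Sx := fun i => pd i (entS G f φ θ t) x)
      (rx := fun i => pd i (fun z => (θ t z)⁻¹) x)
      (px := fun i => pd i (ptilde t) x)
      (q := fun i => K (φ t x) (θ t x) * pd i (fun z => (θ t z)⁻¹) x)
      (qx := fun i => pd i (fun y => K (φ t y) (θ t y) * pd i (fun z => (θ t z)⁻¹) y) x)
      (hθpos t x).ne' (hDF t ht x hx) (hIE t ht x hx) (hNS t ht x hx) ?_ rfl ?_ (fun i => rfl) ?_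
    · refine entropy_algebra (φx := fun i => pd i (φ t) x) (φt := dt φ t x)
        (Ht := dt (fun t x => deriv (f (φ t x)) (θ t x)) t x)
        (Hx := fun i => pd i (fun y => deriv (f (φ t y)) (θ t y)) x)
        (φdt := fun i => dt (fun t x => pd i (φ t) x) t x)
        (φd := fun k i => pd k (fun y => pd i (φ t) y) x)
        ?_ ?_ ?_ ?_ rfl ?_ (fun i j => rfl)
      · simp only [dt_eq_dir hs, dir_entS hG hf hφ2 hθ1 hθpos, dt_eq_dir (hpdφ _),
          dt_eq_dir (joint_deriv_snd hf hφ1 hθ1 hθpos)]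
      · intro k
        rw [pd_eq_dir hs, dir_entS hG hf hφ2 hθ1 hθpos,
          pd_eq_dir (joint_deriv_snd hf hφ1 hθ1 hθpos)]
        simp only [pd_eq_dir (hpdφ _)]
      · rw [dt_eq_dir he, dir_intE hf hφ1 hθ1 hθpos, dt_eq_dir hφ1,
          dt_eq_dir (joint_deriv_snd hf hφ1 hθ1 hθpos)]
      · intro k
        rw [pd_eq_dir he, dir_intE hf hφ1 hθ1 hθpos, pd_eq_dir hφ1,
          pd_eq_dir (joint_deriv_snd hf hφ1 hθ1 hθpos)]
      · intro i
        rw [pd_add (hdtφ.slice t)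
            (ContDiff.sum fun k _ => ((hu1 k).slice t).mul ((hpdφ k).slice t)),
          pd_sum _ fun k => ((hu1 k).slice t).mul ((hpdφ k).slice t)]
        -- what remains is the symmetry of the second space-time derivatives of `φ`
        congr 1
        · rw [pd_eq_dir hdtφ, dt_eq_dir (hpdφ i), hdtφdir, hpdφdir, dir_comm hφ2]
        · refine Finset.sum_congr rfl fun k _ => ?_
          rw [pd_mul ((hu1 k).slice t) ((hpdφ k).slice t), pd_eq_dir (hpdφ k),
            pd_eq_dir (hpdφ i), hpdφdir, hpdφdir, dir_comm hφ2]
    · exact hAC t ht x hx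
    · rw [← symGrad_contract, Finset.mul_sum]
      refine Finset.sum_congr rfl fun i _ => ?_
      rw [Finset.mul_sum]
      exact Finset.sum_congr rfl fun j _ => by ring
  -- On a face `u = 0`, `θ = θ_b` and the normal component of `∇G(∇φ)` vanishes; each of these
  -- kills one group of terms of the normal flux.
  have hfluxbd : ∀ t ∈ Set.Ioo (0 : ℝ) T, ∀ x ∈ box L, ∀ i, (x i = 0 ∨ x i = L i) →
      exFlux G f K η φ θ ptilde u θb t x i = 0 := by
    intro t ht x hx i hi
    have ht' := Set.Ioo_subset_Icc_self ht
    have hfr := mem_frontier_box hx hi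
    simp [exFlux, hubc t ht' x hfr, hθbc t ht' x hfr, hGbc t ht' x hx i hi, hθb.ne']
  have hprodc : ∀ t, Continuous fun x => (M (φ t x) (θ t x) * (chemMu G f φ θ t x / θ t x) ^ 2
      + K (φ t x) (θ t x) * ∑ i, (pd i (fun z => (θ t z)⁻¹) x) ^ 2
      + η (φ t x) (θ t x) / θ t x * ∑ i, ∑ j, (symGrad (u t) x i j) ^ 2) := by
    intro t
    have c1 := (hMj.slice t).continuous
    have c2 := (hKj.slice t).continuous
    have c3 := (hηj.slice t).continuous
    have c4 := (hμ.slice t).continuous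
    have c5 := (hθ1.slice t).continuous
    have c6 : ∀ i, Continuous (pd i fun z => (θ t z)⁻¹) := fun i =>
      ((hr.pd htop i).slice t).continuous
    have c7 : ∀ i j, Continuous fun x => symGrad (u t) x i j := fun i j =>
      ((hsym i j).slice t).continuous
    have c8 : ∀ x, θ t x ≠ 0 := fun x => (hθpos t x).ne'
    exact ((c1.mul ((c4.div c5 c8).pow 2)).add
      (c2.mul (continuous_finsetSum _ fun i _ => (c6 i).pow 2))).add
      ((c3.div c5 c8).mul (continuous_finsetSum _ fun i _ => continuous_finsetSum _ fun j _ =>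
        (c7 i j).pow 2))
  have hQc : ∀ t, Continuous fun x => Q t x * (1 - θb / θ t x) := fun t =>
    (Joint.slice hQsm t).continuous.mul (continuous_const.sub
      (continuous_const.div (hθ1.slice t).continuous fun x => (hθpos t x).ne'))
  have hbc : ∀ t, Continuous fun x => dot (b t x) (u t x) := fun t =>
    continuous_finsetSum _ fun j _ => ((hbi j).slice t).continuous.mul ((hu1 j).slice t).continuous
  have hmain : ∀ t ∈ Set.Ioo (0 : ℝ) T,
      HasDerivAt (fun s => ∫ x in box L, (totE f φ θ u s x - θb * entS G f φ θ s x))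
        (-θb * entProd L G f M K η φ θ u t
          + (∫ x in box L, Q t x * (1 - θb / θ t x))
          + ∫ x in box L, dot (b t x) (u t x)) t := by
    intro t ht
    have hder := hasDerivAt_integral_box (L := L) hE t
    rw [setIntegral_congr_fun hbm (hpoint t ht)] at hder
    have hdc : Continuous fun x => divg (exFlux G f K η φ θ ptilde u θb t) x :=
      continuous_finsetSum _ fun i _ => (contDiff_pd (m := 0) (hFlux t i) (by simp) i).continuous
    have i1 := integrableOn_box (L := L) ((hprodc t).const_mul (-θb))
    have i2 := integrableOn_box (L := L) (hQc t)
    have i3 := integrableOn_box (L := L) (hbc t)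
    have i4 := integrableOn_box (L := L) hdc
    have i12 := Integrable.fun_add i1 i2
    have i123 := Integrable.fun_add i12 i3
    rw [integral_sub i123 i4, integral_add i12 i3, integral_add i1 i2,
      integral_const_mul, integral_divg_eq_zero hd0 hL (hFlux t) (hfluxbd t ht), sub_zero] at hder
    exact hder
  refine ⟨fun t ht => (hmain t ht).deriv, fun hQ0 hb0 => ?_⟩
  have hanti : AntitoneOn
      (fun s => ∫ x in box L, (totE f φ θ u s x - θb * entS G f φ θ s x)) (Set.Ioo 0 T) := by
    refine antitoneOn_of_deriv_nonpos (convex_Ioo 0 T)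
      (fun t ht => (hmain t ht).continuousAt.continuousWithinAt) ?_ ?_ <;>
      rw [interior_Ioo]
    · exact fun t ht => (hmain t ht).differentiableAt.differentiableWithinAt
    · intro t ht
      have hD : 0 ≤ entProd L G f M K η φ θ u t := by
        refine setIntegral_nonneg hbm fun x _ => ?_
        have := hMpos (φ t x) (θ t x)
        have := hKpos (φ t x) (θ t x)
        have := hηpos (φ t x) (θ t x)
        have := hθpos t x
        positivity
      rw [(hmain t ht).deriv]
      simp only [hQ0, hb0, dot, Pi.zero_apply, zero_mul, Finset.sum_const_zero, integral_zero, add_zero]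
      nlinarith [mul_nonneg hθb.le hD]
  exact fun t₁ h₁ t₂ h₂ h₁₂ => hanti h₁ h₂ h₁₂
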